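/- arXiv:2507.23468 — 4 statements merged into one kernel-verified Lean document; each statement's English description precedes it below -/
import Mathlib

section
/- (Resolution of the complex Calogero–Moser system.) Let ω ∈ ℂ with ω ≠ 0, let r ≥ 1, let I ⊆ ℝ be an open interval containing 0, and let λ_1, …, λ_r : I → ℂ be twice differentiable functions that are pairwise distinct at every t ∈ I and satisfy λ_k''(t) + ω² λ_k(t) = Σ_{m≠k} 2/(λ_k(t) − λ_m(t))³ for all k and t ∈ I. Let Λ₀ = diag(λ_1(0), …, λ_r(0)) and let L₀ be the r×r complex matrix with entries (L₀)_{jk} = (λ_j'(0) + iω λ_j(0)) δ_{jk} + i (1−δ_{jk})/(λ_j(0) − λ_k(0)). Then for every t ∈ I and every z ∈ ℂ: det( z·I − ( e^{−iωt} Λ₀ + (sin(ωt)/ω) L₀ ) ) = ∏_{k=1}^r ( z − λ_k(t) ); in particular the multiset of eigenvalues of the matrix e^{−iωt} Λ₀ + (sin(ωt)/ω) L₀ is exactly {λ_1(t), …, λ_r(t)}. -/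
open scoped BigOperators

/-!
The positions `x`, the momenta `v` and the Lax matrix `L = diag v + (i / (x j - x k))` satisfy, for
a suitable matrix `B` depending on `x`,
`X' = [B, X] + L` and `L' = [B, L] - κ X`, where `X = diag x`.
If `g'' = -κ g`, then `A = g L - g' X` therefore satisfies the Lax equation `A' = [B, A]`, so its
characteristic polynomial is conserved. Choosing the solution `g` with `g t = 0` and `g' t = -1`
makes `A` equal to `diag (x t)` at time `t`, while at the initial time `A` is an explicit
combination of the initial data.
-/

open Finset Matrix Complex

section JacobiFormula

variable {𝕜 R m n : Type*}

open scoped Matrix.Norms.Elementwise in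
theorem hasDerivAt_matrix [Finite m] [Finite n] [NontriviallyNormedField 𝕜] [NormedAddCommGroup R]
    [NormedSpace 𝕜 R] {A : 𝕜 → Matrix m n R} {A' : Matrix m n R} {t : 𝕜} :
    HasDerivAt A A' t ↔ ∀ i j, HasDerivAt (fun s => A s i j) (A' i j) t := by
  have := Fintype.ofFinite m
  have := Fintype.ofFinite n
  exact hasDerivAt_pi.trans (forall_congr' fun _ => hasDerivAt_pi)

variable [Fintype n] [DecidableEq n]

theorem sum_det_updateRow [CommRing R] (A B : Matrix n n R) :
    ∑ i, (A.updateRow i (B i)).det = (B * A.adjugate).trace := by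
  refine sum_congr rfl fun i _ => ?_
  rw [← cramer_transpose_apply, cramer_eq_adjugate_mulVec, ← adjugate_transpose, mulVec_transpose]
  rfl

theorem hasDerivAt_det [NontriviallyNormedField 𝕜] [NormedCommRing R] [NormedAlgebra 𝕜 R]
    {A : 𝕜 → Matrix n n R} {A' : Matrix n n R} {t : 𝕜} (hA : HasDerivAt A A' t) :
    HasDerivAt (fun s => (A s).det) (A' * (A t).adjugate).trace t := by
  let detRows : ContinuousMultilinearMap 𝕜 (fun _ : n => n → R) R :=
    { toMultilinearMap := (detRowAlternating (R := R)).toMultilinearMap.restrictScalars 𝕜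
      cont := continuous_id.matrix_det }
  have hrow (i : n) : HasDerivAt (fun s => A s i) (A' i) t :=
    hasDerivAt_pi.2 (hasDerivAt_matrix.1 hA i)
  have hdet := (HasFDerivAt.multilinear_comp detRows fun i => (hrow i).hasFDerivAt).hasDerivAt
  refine hdet.congr_deriv ?_
  rw [← sum_det_updateRow, _root_.sum_apply]
  exact sum_congr rfl fun i _ => congrArg (fun w => (updateRow (A t) i w).det) (one_smul 𝕜 _)

end JacobiFormula

attribute [local instance] LieRing.ofAssociativeRing

section LaxEquation

variable {n : Type*} [Fintype n] [DecidableEq n]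

theorem trace_lie_mul_adjugate {R : Type*} [CommRing R] (A B : Matrix n n R) :
    (⁅B, A⁆ * A.adjugate).trace = 0 := by
  rw [Ring.lie_def, sub_mul, trace_sub, mul_assoc, mul_assoc, trace_mul_comm A, mul_assoc,
    mul_adjugate, adjugate_mul, sub_self]

open scoped Matrix.Norms.Elementwise in
theorem charpoly_eq_of_hasDerivAt_lie {𝕜 K : Type*} [RCLike 𝕜] [NormedField K] [NormedAlgebra 𝕜 K]
    {S : Set 𝕜} (hS : IsOpen S) (hS' : IsPreconnected S) {A B : 𝕜 → Matrix n n K}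
    (hA : ∀ t ∈ S, HasDerivAt A ⁅B t, A t⁆ t) {s t : 𝕜} (hs : s ∈ S) (ht : t ∈ S) :
    (A s).charpoly = (A t).charpoly := by
  have : Infinite K := Infinite.of_injective _ (algebraMap 𝕜 K).injective
  refine Polynomial.funext fun z => ?_
  have hdet (u) (hu : u ∈ S) : HasDerivAt (fun u => (scalar n z - A u).det) 0 u := by
    have hlie : ⁅B u, scalar n z - A u⁆ = -⁅B u, A u⁆ := by
      rw [lie_sub, (scalar_commute z (Commute.all z) (B u)).symm.lie_eq, zero_sub]
    rw [← trace_lie_mul_adjugate (scalar n z - A u) (B u), hlie]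
    exact hasDerivAt_det ((hA u hu).const_sub _)
  simp only [eval_charpoly]
  exact hS.is_const_of_deriv_eq_zero hS'
    (fun u hu => (hdet u hu).differentiableAt.differentiableWithinAt)
    (fun u hu => (hdet u hu).deriv) hs ht

end LaxEquation

section LaxPair

variable {ι K : Type*} [Field K]

/-- The antisymmetric matrix with entries `1 / (x j - x k)`. Its diagonal vanishes because
`0⁻¹ = 0`. -/
def invDiff (x : ι → K) : Matrix ι ι K :=
  of fun j k => (x j - x k)⁻¹

/-- The Lax matrix of the Calogero–Moser system at positions `x` and velocities `v`. -/
noncomputable def laxMatrix [DecidableEq ι] (x v : ι → ℂ) : Matrix ι ι ℂ :=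
  diagonal v + I • invDiff x

theorem laxMatrix_eq_of [DecidableEq ι] (x v : ι → ℂ) :
    laxMatrix x v = of fun j k => if j = k then v j else I / (x j - x k) := by
  ext j k
  obtain rfl | hjk := eq_or_ne j k
  · simp [laxMatrix, invDiff]
  · simp [laxMatrix, invDiff, hjk, div_eq_mul_inv]

theorem laxMatrix_sub_smul [DecidableEq ι] (x v w : ι → ℂ) (c : ℂ) :
    laxMatrix x (v - c • w) = laxMatrix x v - c • diagonal w := by
  rw [laxMatrix, laxMatrix, ← diagonal_smul, add_sub_right_comm, diagonal_sub]
  rfl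

theorem inv_sub_mul_inv_sub_mul_sub {a b c : K} (hab : a ≠ b) (hbc : b ≠ c) (hac : a ≠ c) :
    (a - b)⁻¹ ^ 2 * (b - c)⁻¹ - (a - b)⁻¹ * (b - c)⁻¹ ^ 2 =
      ((a - b)⁻¹ ^ 2 - (c - b)⁻¹ ^ 2) * (a - c)⁻¹ := by
  have := sub_ne_zero.2 hab
  have := sub_ne_zero.2 hbc
  have := sub_ne_zero.2 hac
  rw [← neg_sub b c]
  field_simp
  ring

variable [Fintype ι]

theorem sum_inv_sub_mul_inv_sub_mul_sub {x : ι → K} (hx : Function.Injective x) {j k : ι}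
    (hjk : j ≠ k) :
    ∑ l, ((x j - x l)⁻¹ ^ 2 * (x l - x k)⁻¹ - (x j - x l)⁻¹ * (x l - x k)⁻¹ ^ 2) =
      ∑ l, ((x j - x l)⁻¹ ^ 2 - (x k - x l)⁻¹ ^ 2) * (x j - x k)⁻¹ := by
  classical
  let c := (x j - x k)⁻¹ ^ 3
  -- The terms `l = j` and `l = k` violate the termwise identity, by opposite amounts.
  have hterm (l : ι) :
      (x j - x l)⁻¹ ^ 2 * (x l - x k)⁻¹ - (x j - x l)⁻¹ * (x l - x k)⁻¹ ^ 2 =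
        ((x j - x l)⁻¹ ^ 2 - (x k - x l)⁻¹ ^ 2) * (x j - x k)⁻¹ +
          ((if l = j then c else 0) - if l = k then c else 0) := by
    obtain rfl | hlj := eq_or_ne l j
    · simp only [if_pos, if_neg hjk, sub_self, _root_.inv_zero, ← neg_sub (x l) (x k), inv_neg, c]
      ring
    obtain rfl | hlk := eq_or_ne l k
    · simp only [if_pos, if_neg hlj, sub_self, _root_.inv_zero, c]
      ring
    · rw [if_neg hlj, if_neg hlk, sub_zero, add_zero]
      exact inv_sub_mul_inv_sub_mul_sub (hx.ne hlj.symm) (hx.ne hlk) (hx.ne hjk)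
  simp only [hterm, sum_add_distrib, sum_sub_distrib, sum_ite_eq', mem_univ, if_true, sub_self,
    add_zero]

variable [DecidableEq ι]

/-- The matrix with off-diagonal entries `1 / (x j - x k) ^ 2` and vanishing row sums. Times `i`, it
is the second member of the Calogero–Moser Lax pair. -/
def invSqDiffLaplacian (x : ι → K) : Matrix ι ι K :=
  of (fun j k => (x j - x k)⁻¹ ^ 2) - diagonal fun j => ∑ l, (x j - x l)⁻¹ ^ 2

/-- The Calogero–Moser interaction: the force exerted on each particle by all the others. -/
def calogeroMoserForce (x : ι → K) (k : ι) : K :=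
  ∑ m ∈ univ.erase k, 2 / (x k - x m) ^ 3

theorem lie_invSqDiffLaplacian_diagonal (x v : ι → K) :
    ⁅invSqDiffLaplacian x, diagonal v⁆ = of fun j k => (v k - v j) * (x j - x k)⁻¹ ^ 2 := by
  rw [invSqDiffLaplacian, sub_lie, sub_eq_self.2 (commute_diagonal _ _).lie_eq]
  ext j k
  rw [Ring.lie_def, Matrix.sub_apply, mul_diagonal, diagonal_mul, of_apply, of_apply]
  ring

theorem lie_invSqDiffLaplacian_diagonal_self (x : ι → K) :
    ⁅invSqDiffLaplacian x, diagonal x⁆ = -invDiff x := by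
  rw [lie_invSqDiffLaplacian_diagonal]
  ext j k
  obtain h | h := eq_or_ne (x j - x k) 0
  · simp [invDiff, h]
  · simp only [of_apply, Matrix.neg_apply, invDiff]
    field_simp
    ring

theorem lie_invSqDiffLaplacian_invDiff_apply (x : ι → K) (j k : ι) :
    ⁅invSqDiffLaplacian x, invDiff x⁆ j k =
      ∑ l, ((x j - x l)⁻¹ ^ 2 * (x l - x k)⁻¹ - (x j - x l)⁻¹ * (x l - x k)⁻¹ ^ 2) -
        ∑ l, ((x j - x l)⁻¹ ^ 2 - (x k - x l)⁻¹ ^ 2) * (x j - x k)⁻¹ := by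
  rw [invSqDiffLaplacian, sub_lie, Ring.lie_def, Ring.lie_def]
  simp only [Matrix.sub_apply, mul_diagonal, diagonal_mul, invDiff, of_apply]
  simp only [mul_apply, of_apply, sum_sub_distrib, ← sum_mul]
  ring

theorem lie_invSqDiffLaplacian_invDiff {x : ι → K} (hx : Function.Injective x) :
    ⁅invSqDiffLaplacian x, invDiff x⁆ = -diagonal (calogeroMoserForce x) := by
  ext j k
  rw [lie_invSqDiffLaplacian_invDiff_apply, Matrix.neg_apply]
  obtain rfl | hjk := eq_or_ne j k
  · simp only [sub_self, zero_mul, sum_const_zero, sub_zero, diagonal_apply_eq]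
    rw [← sum_erase (a := j) _ (by simp), calogeroMoserForce, ← sum_neg_distrib]
    refine sum_congr rfl fun l _ => ?_
    rw [← neg_sub (x j) (x l), inv_neg, div_eq_mul_inv, ← inv_pow]
    ring
  · rw [sum_inv_sub_mul_inv_sub_mul_sub hx hjk, sub_self, diagonal_apply_ne _ hjk, neg_zero]

/-- The matrix `B` completing `laxMatrix` to a Lax pair: `L' = [B, L]` in the absence of an
external potential. -/
noncomputable def laxPartner (x : ι → ℂ) : Matrix ι ι ℂ :=
  I • invSqDiffLaplacian x

theorem lie_laxPartner_diagonal (x v : ι → ℂ) :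
    ⁅laxPartner x, diagonal x⁆ = diagonal v - laxMatrix x v := by
  rw [laxPartner, smul_lie, lie_invSqDiffLaplacian_diagonal_self, laxMatrix, smul_neg,
    sub_add_cancel_left]

theorem lie_laxPartner_laxMatrix {x : ι → ℂ} (hx : Function.Injective x) (v : ι → ℂ) :
    ⁅laxPartner x, laxMatrix x v⁆ =
      diagonal (calogeroMoserForce x) + I • ⁅invSqDiffLaplacian x, diagonal v⁆ := by
  rw [laxPartner, laxMatrix, lie_add, smul_lie, smul_lie, lie_smul,
    lie_invSqDiffLaplacian_invDiff hx, smul_smul, I_mul_I, neg_one_smul, neg_neg, add_comm]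

end LaxPair

section Derivatives

variable {𝕜 ι K : Type*} [NontriviallyNormedField 𝕜] [DecidableEq ι]

theorem hasDerivAt_diagonal [Finite ι] [NormedAddCommGroup K] [NormedSpace 𝕜 K] {x : 𝕜 → ι → K}
    {v : ι → K} {t : 𝕜} (hx : HasDerivAt x v t) :
    HasDerivAt (fun s => diagonal (x s)) (diagonal v) t := by
  have := Fintype.ofFinite ι
  refine hasDerivAt_matrix.2 fun j k => ?_
  obtain rfl | hjk := eq_or_ne j k
  · simpa only [diagonal_apply_eq] using hasDerivAt_pi.1 hx j
  · simpa only [diagonal_apply_ne _ hjk] using hasDerivAt_const t (0 : K)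

theorem hasDerivAt_invDiff [Fintype ι] [NontriviallyNormedField K] [NormedAlgebra 𝕜 K]
    {x : 𝕜 → ι → K} {v : ι → K} {t : 𝕜} (hx : HasDerivAt x v t)
    (hinj : Function.Injective (x t)) :
    HasDerivAt (fun s => invDiff (x s)) ⁅invSqDiffLaplacian (x t), diagonal v⁆ t := by
  rw [lie_invSqDiffLaplacian_diagonal]
  refine hasDerivAt_matrix.2 fun j k => ?_
  simp only [invDiff, of_apply]
  obtain rfl | hjk := eq_or_ne j k
  · simpa only [sub_self, zero_mul] using hasDerivAt_const t (0⁻¹ : K)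
  · have hsub := (hasDerivAt_pi.1 hx j).fun_sub (hasDerivAt_pi.1 hx k)
    refine (hsub.fun_inv (sub_ne_zero.2 (hinj.ne hjk))).congr_deriv ?_
    rw [neg_sub, div_eq_mul_inv, inv_pow]

end Derivatives

section Oscillator

variable {𝕜 : Type*}

/-- `f` solves the linear oscillator equation `f'' + κ f = 0` on `S`, where the squared frequency
`κ` may depend on time. The derivative `f'` is part of the data. -/
structure IsOscillatorSolution [NontriviallyNormedField 𝕜] [NormedAlgebra 𝕜 ℂ] (κ f f' : 𝕜 → ℂ)
    (S : Set 𝕜) : Prop where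
  hasDerivAt : ∀ t ∈ S, HasDerivAt f (f' t) t
  hasDerivAt_deriv : ∀ t ∈ S, HasDerivAt f' (-(κ t * f t)) t

namespace IsOscillatorSolution

theorem const_mul_sub_const_mul [NontriviallyNormedField 𝕜] [NormedAlgebra 𝕜 ℂ]
    {κ f f' g g' : 𝕜 → ℂ} {S : Set 𝕜} (hf : IsOscillatorSolution κ f f' S)
    (hg : IsOscillatorSolution κ g g' S) (a b : ℂ) :
    IsOscillatorSolution κ (fun t => a * f t - b * g t) (fun t => a * f' t - b * g' t) S where
  hasDerivAt t ht := ((hf.hasDerivAt t ht).const_mul a).fun_sub ((hg.hasDerivAt t ht).const_mul b)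
  hasDerivAt_deriv t ht :=
    (((hf.hasDerivAt_deriv t ht).const_mul a).fun_sub
      ((hg.hasDerivAt_deriv t ht).const_mul b)).congr_deriv (by ring)

theorem wronskian_eq [RCLike 𝕜] [NormedAlgebra 𝕜 ℂ] {κ f f' g g' : 𝕜 → ℂ} {S : Set 𝕜}
    (hf : IsOscillatorSolution κ f f' S) (hg : IsOscillatorSolution κ g g' S) (hS : IsOpen S)
    (hS' : IsPreconnected S) {s t : 𝕜} (hs : s ∈ S) (ht : t ∈ S) :
    f s * g' s - g s * f' s = f t * g' t - g t * f' t := by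
  have hderiv (u) (hu : u ∈ S) : HasDerivAt (fun u => f u * g' u - g u * f' u) 0 u :=
    (((hf.hasDerivAt u hu).fun_mul (hg.hasDerivAt_deriv u hu)).fun_sub
      ((hg.hasDerivAt u hu).fun_mul (hf.hasDerivAt_deriv u hu))).congr_deriv (by ring)
  exact hS.is_const_of_deriv_eq_zero hS'
    (fun u hu => (hderiv u hu).differentiableAt.differentiableWithinAt)
    (fun u hu => (hderiv u hu).deriv) hs ht

end IsOscillatorSolution

theorem isOscillatorSolution_exp (ω : ℂ) (S : Set ℝ) :
    IsOscillatorSolution (fun _ => ω ^ 2) (fun t : ℝ => exp (-I * ω * t))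
      (fun t => -I * ω * exp (-I * ω * t)) S := by
  have hexp (t : ℝ) : HasDerivAt (fun t : ℝ => exp (-I * ω * t)) (-I * ω * exp (-I * ω * t)) t :=
    (((hasDerivAt_id (t : ℂ)).const_mul (-I * ω)).cexp.comp_ofReal).congr_deriv
      (by simp only [id, mul_one, mul_comm])
  refine ⟨fun t _ => hexp t, fun t _ => ((hexp t).const_mul _).congr_deriv ?_⟩
  linear_combination ω ^ 2 * exp (-I * ω * t) * I_sq

theorem isOscillatorSolution_sin_div {ω : ℂ} (hω : ω ≠ 0) (S : Set ℝ) :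
    IsOscillatorSolution (fun _ => ω ^ 2) (fun t : ℝ => sin (ω * t) / ω)
      (fun t => cos (ω * t)) S := by
  have hlin (t : ℝ) : HasDerivAt (fun z : ℂ => ω * z) ω t := hasDerivAt_const_mul ω
  refine ⟨fun t _ => ((hlin t).csin.div_const ω).comp_ofReal.congr_deriv ?_,
    fun t _ => (hlin t).ccos.comp_ofReal.congr_deriv ?_⟩
  · exact mul_div_cancel_right₀ _ hω
  · field_simp

end Oscillator

section CalogeroMoser

variable {𝕜 ι : Type*} [Fintype ι] [DecidableEq ι]

/-- The particles at positions `x` with velocities `v` move on `S` by the Calogero–Moser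
system in a harmonic trap whose squared frequency `κ` may depend on time. -/
structure IsCalogeroMoserSolution [NontriviallyNormedField 𝕜] [NormedAlgebra 𝕜 ℂ] (κ : 𝕜 → ℂ)
    (x v : 𝕜 → ι → ℂ) (S : Set 𝕜) : Prop where
  hasDerivAt_position : ∀ t ∈ S, HasDerivAt x (v t) t
  hasDerivAt_velocity : ∀ t ∈ S, HasDerivAt v (calogeroMoserForce (x t) - κ t • x t) t
  injective : ∀ t ∈ S, Function.Injective (x t)

theorem isCalogeroMoserSolution_of_deriv {κ : ℝ → ℂ} {lam : ι → ℝ → ℂ} {S : Set ℝ}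
    (hdiff : ∀ k, ∀ t ∈ S, DifferentiableAt ℝ (lam k) t)
    (hdiff' : ∀ k, ∀ t ∈ S, DifferentiableAt ℝ (deriv (lam k)) t)
    (hne : ∀ t ∈ S, ∀ j k, j ≠ k → lam j t ≠ lam k t)
    (hode : ∀ k, ∀ t ∈ S, deriv (deriv (lam k)) t + κ t * lam k t =
      ∑ m ∈ univ.erase k, 2 / (lam k t - lam m t) ^ 3) :
    IsCalogeroMoserSolution κ (fun t k => lam k t) (fun t k => deriv (lam k) t) S where
  hasDerivAt_position t ht := hasDerivAt_pi.2 fun k => (hdiff k t ht).hasDerivAt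
  hasDerivAt_velocity t ht := hasDerivAt_pi.2 fun k =>
    (hdiff' k t ht).hasDerivAt.congr_deriv (eq_sub_of_add_eq (hode k t ht))
  injective t ht j k := not_imp_not.1 (hne t ht j k)

namespace IsCalogeroMoserSolution

open scoped Matrix.Norms.Elementwise

section

variable [NontriviallyNormedField 𝕜] [NormedAlgebra 𝕜 ℂ] {κ : 𝕜 → ℂ} {x v : 𝕜 → ι → ℂ} {S : Set 𝕜}

theorem hasDerivAt_diagonal_position (h : IsCalogeroMoserSolution κ x v S) {t : 𝕜} (ht : t ∈ S) :
    HasDerivAt (fun s => diagonal (x s))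
      (⁅laxPartner (x t), diagonal (x t)⁆ + laxMatrix (x t) (v t)) t := by
  rw [lie_laxPartner_diagonal _ (v t), sub_add_cancel]
  exact hasDerivAt_diagonal (h.hasDerivAt_position t ht)

theorem hasDerivAt_laxMatrix (h : IsCalogeroMoserSolution κ x v S) {t : 𝕜} (ht : t ∈ S) :
    HasDerivAt (fun s => laxMatrix (x s) (v s))
      (⁅laxPartner (x t), laxMatrix (x t) (v t)⁆ - κ t • diagonal (x t)) t := by
  have hdiag := hasDerivAt_diagonal (h.hasDerivAt_velocity t ht)
  have hinv := hasDerivAt_invDiff (h.hasDerivAt_position t ht) (h.injective t ht)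
  refine (hdiag.add (hinv.const_smul I)).congr_deriv ?_
  rw [lie_laxPartner_laxMatrix (h.injective t ht), add_sub_right_comm, ← diagonal_smul,
    diagonal_sub]
  rfl

theorem hasDerivAt_smul_laxMatrix_sub (h : IsCalogeroMoserSolution κ x v S) {g g' : 𝕜 → ℂ}
    (hg : IsOscillatorSolution κ g g' S) {t : 𝕜} (ht : t ∈ S) :
    HasDerivAt (fun s => g s • laxMatrix (x s) (v s) - g' s • diagonal (x s))
      ⁅laxPartner (x t), g t • laxMatrix (x t) (v t) - g' t • diagonal (x t)⁆ t := by
  have hL := (hg.hasDerivAt t ht).fun_smul (h.hasDerivAt_laxMatrix ht)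
  have hX := (hg.hasDerivAt_deriv t ht).fun_smul (h.hasDerivAt_diagonal_position ht)
  refine (hL.fun_sub hX).congr_deriv ?_
  rw [lie_sub, lie_smul, lie_smul]
  module

end

theorem charpoly_smul_laxMatrix_sub_eq [RCLike 𝕜] [NormedAlgebra 𝕜 ℂ] {κ g g' : 𝕜 → ℂ}
    {x v : 𝕜 → ι → ℂ} {S : Set 𝕜} (h : IsCalogeroMoserSolution κ x v S)
    (hg : IsOscillatorSolution κ g g' S) (hS : IsOpen S) (hS' : IsPreconnected S) {s t : 𝕜}
    (hs : s ∈ S) (ht : t ∈ S) :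
    (g s • laxMatrix (x s) (v s) - g' s • diagonal (x s)).charpoly =
      (g t • laxMatrix (x t) (v t) - g' t • diagonal (x t)).charpoly :=
  charpoly_eq_of_hasDerivAt_lie hS hS' (fun _ hu => h.hasDerivAt_smul_laxMatrix_sub hg hu) hs ht

end IsCalogeroMoserSolution

theorem resolution_calogero_moser_general [RCLike 𝕜] [NormedAlgebra 𝕜 ℂ] {κ f f' g g' : 𝕜 → ℂ}
    {x v : 𝕜 → ι → ℂ} {S : Set 𝕜} {ν : ℂ} (hS : IsOpen S) (hS' : IsPreconnected S)
    (h : IsCalogeroMoserSolution κ x v S) (hf : IsOscillatorSolution κ f f' S)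
    (hg : IsOscillatorSolution κ g g' S) {τ t : 𝕜} (hτ : τ ∈ S) (ht : t ∈ S) (hfτ : f τ = 1)
    (hfτ' : f' τ = ν) (hgτ : g τ = 0) (hgτ' : g' τ = 1) :
    (f t • diagonal (x τ) + g t • laxMatrix (x τ) (v τ - ν • x τ)).charpoly =
      ∏ k, (Polynomial.X - Polynomial.C (x t k)) := by
  have hconserved :=
    h.charpoly_smul_laxMatrix_sub_eq (hf.const_mul_sub_const_mul hg (g t) (f t)) hS hS' hτ ht
  have hwronskian : g t * f' t - f t * g' t = -1 := by
    have := hf.wronskian_eq hg hS hS' hτ ht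
    rw [hfτ, hfτ', hgτ, hgτ'] at this
    linear_combination this
  rw [hwronskian, mul_comm (g t) (f t), sub_self, zero_smul, zero_sub, neg_one_smul, neg_neg,
    charpoly_diagonal, hfτ, hfτ', hgτ, hgτ'] at hconserved
  rw [← hconserved, laxMatrix_sub_smul]
  congr 1
  module

end CalogeroMoser

/-- **Resolution of the complex Calogero–Moser system.** If the pairwise distinct
functions `λ_k : I → ℂ` satisfy `λ_k'' + ω² λ_k = Σ_{m≠k} 2/(λ_k - λ_m)³` on an open
interval `I = (t₀, t₁)` containing `0`, with `ω ≠ 0`, then for every `t ∈ I` the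
characteristic polynomial of `e^(-iωt) Λ₀ + (sin(ωt)/ω) L₀` is `∏_k (z - λ_k(t))`:
the eigenvalues of that matrix are exactly the `λ_k(t)` with multiplicity. -/
theorem resolution_calogero_moser (ω : ℂ) (hω : ω ≠ 0) (r : ℕ) (hr : 1 ≤ r) (t₀ t₁ : ℝ)
    (h0 : (0 : ℝ) ∈ Set.Ioo t₀ t₁)
    (lam : Fin r → ℝ → ℂ)
    (hlam1 : ∀ k : Fin r, ∀ t ∈ Set.Ioo t₀ t₁, DifferentiableAt ℝ (lam k) t)
    (hlam2 : ∀ k : Fin r, ∀ t ∈ Set.Ioo t₀ t₁, DifferentiableAt ℝ (deriv (lam k)) t)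
    (hdist : ∀ t ∈ Set.Ioo t₀ t₁, ∀ j k : Fin r, j ≠ k → lam j t ≠ lam k t)
    (hODE : ∀ k : Fin r, ∀ t ∈ Set.Ioo t₀ t₁,
      deriv (deriv (lam k)) t + ω ^ 2 * lam k t =
        ∑ m ∈ Finset.univ.erase k, 2 / (lam k t - lam m t) ^ 3)
    (Λ₀ L₀ : Matrix (Fin r) (Fin r) ℂ)
    (hΛ₀ : Λ₀ = Matrix.diagonal fun k => lam k 0)
    (hL₀ : L₀ = Matrix.of fun j k =>
      if j = k then deriv (lam j) 0 + Complex.I * ω * lam j 0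
      else Complex.I / (lam j 0 - lam k 0)) :
    ∀ t ∈ Set.Ioo t₀ t₁, ∀ z : ℂ,
      (z • (1 : Matrix (Fin r) (Fin r) ℂ)
          - (Complex.exp (-Complex.I * ω * (t : ℂ)) • Λ₀
              + (Complex.sin (ω * (t : ℂ)) / ω) • L₀)).det
        = ∏ k : Fin r, (z - lam k t) := by
  intro t ht z
  have hsol := isCalogeroMoserSolution_of_deriv (κ := fun _ => ω ^ 2) hlam1 hlam2 hdist hODE
  have hcharpoly := resolution_calogero_moser_general isOpen_Ioo isPreconnected_Ioo hsol
    (isOscillatorSolution_exp ω _) (isOscillatorSolution_sin_div hω _) h0 ht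
    (by simp) (ν := -I * ω) (by simp) (by simp) (by simp)
  have hL : L₀ = laxMatrix (fun k => lam k 0) ((fun k => deriv (lam k) 0) -
      (-I * ω) • fun k => lam k 0) := by
    rw [hL₀, laxMatrix_eq_of]
    simp
  rw [hΛ₀, hL, smul_one_eq_diagonal, ← scalar_apply, ← eval_charpoly, hcharpoly]
  simp only [Polynomial.eval_prod, Polynomial.eval_sub, Polynomial.eval_X, Polynomial.eval_C]
end

section
/- (Gershgorin disc separation for the zero trajectories.) Let r ≥ 1, let a > 0 be real, and let λ⁰_1, …, λ⁰_r ∈ ℂ be pairwise distinct with min_{i≠j} |λ⁰_i − λ⁰_j| ≥ √((r−1)/a). Define for each t ∈ ℝ the matrix Λ(t) = (cos t + 2ia sin t)·diag(λ⁰_1,…,λ⁰_r) + sin(t)·P, where P_{jk} = i/(λ⁰_j − λ⁰_k) for j ≠ k and P_{jj} = 0, and the Gershgorin radii R_i(t) = |sin t| · Σ_{j≠i} 1/|λ⁰_i − λ⁰_j|. Then for all t ∈ ℝ and all i ≠ j: |Λ_{ii}(t) − Λ_{jj}(t)| ≥ R_i(t) + R_j(t); explicitly, |λ⁰_i − λ⁰_j|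 · √(cos²t + 4a² sin²t) ≥ |sin t| · ( Σ_{k≠i} 1/|λ⁰_k − λ⁰_i| + Σ_{k≠j} 1/|λ⁰_k − λ⁰_j| ). -/
open scoped BigOperators

/-!
Each of the `n = r - 1` summands `1 / |λ⁰_k - λ⁰_i|` is at most `1 / δ` for `δ = √(n / a)`, and
`n / δ = a δ`: the separation `δ` is the one for which both row sums together are at most
`2 a δ ≤ 2 a |λ⁰_i - λ⁰_j|`. Multiplying by `|sin t|`, the factor `2 a |sin t|` is the imaginary
part, in modulus, of the common diagonal factor `cos t + 2 i a sin t`, hence at most its modulus.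
-/

theorem sum_one_div_le_card_div {ι K : Type*} [Field K] [LinearOrder K] [IsStrictOrderedRing K]
    {s : Finset ι} {f : ι → K} {δ : K} (hδ : 0 < δ) (hf : ∀ k ∈ s, δ ≤ f k) :
    ∑ k ∈ s, 1 / f k ≤ s.card / δ := by
  calc ∑ k ∈ s, 1 / f k ≤ s.card • (1 / δ) :=
        s.sum_le_card_nsmul _ _ fun k hk => one_div_le_one_div_of_le hδ (hf k hk)
    _ = s.card / δ := by rw [nsmul_eq_mul, mul_one_div]

theorem div_sqrt_div_eq_mul_sqrt {a : ℝ} (ha : a ≠ 0) (x : ℝ) :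
    x / √(x / a) = a * √(x / a) := by
  calc x / √(x / a) = a * (x / a) / √(x / a) := by rw [mul_div_cancel₀ x ha]
    _ = a * √(x / a) := by rw [mul_div_assoc, Real.div_sqrt]

theorem sum_one_div_le_mul_sqrt_card_div {ι : Type*} {s : Finset ι} {f : ι → ℝ} {a : ℝ}
    (ha : 0 < a) (hf : ∀ k ∈ s, √(s.card / a) ≤ f k) :
    ∑ k ∈ s, 1 / f k ≤ a * √(s.card / a) := by
  rcases s.eq_empty_or_nonempty with rfl | hs
  · simp
  · have hδ : 0 < √(s.card / a) :=
      Real.sqrt_pos.mpr (div_pos (Nat.cast_pos.mpr hs.card_pos) ha)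
    exact (sum_one_div_le_card_div hδ hf).trans_eq (div_sqrt_div_eq_mul_sqrt ha.ne' _)

section SeparatedFamily

variable {ι X : Type*} [Fintype ι] [DecidableEq ι] [PseudoMetricSpace X] {x : ι → X} {a : ℝ}

theorem sum_one_div_dist_le_mul_sqrt (ha : 0 < a) {i : ι}
    (hsep : ∀ k, k ≠ i → √((Fintype.card ι - 1) / a) ≤ dist (x k) (x i)) :
    ∑ k ∈ Finset.univ.erase i, 1 / dist (x k) (x i) ≤ a * √((Fintype.card ι - 1) / a) := by
  have hcard : ((Finset.univ.erase i).card : ℝ) = Fintype.card ι - 1 :=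
    Finset.cast_card_erase_of_mem (Finset.mem_univ i)
  rw [← hcard] at hsep ⊢
  exact sum_one_div_le_mul_sqrt_card_div ha fun k hk => hsep k (Finset.ne_of_mem_erase hk)

theorem sum_one_div_dist_add_sum_one_div_dist_le (ha : 0 < a)
    (hsep : Pairwise fun i j => √((Fintype.card ι - 1) / a) ≤ dist (x i) (x j))
    {i j : ι} (hij : i ≠ j) :
    ∑ k ∈ Finset.univ.erase i, 1 / dist (x k) (x i) +
        ∑ k ∈ Finset.univ.erase j, 1 / dist (x k) (x j) ≤ 2 * a * dist (x i) (x j) := by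
  calc _ ≤ a * √((Fintype.card ι - 1) / a) + a * √((Fintype.card ι - 1) / a) :=
        add_le_add (sum_one_div_dist_le_mul_sqrt ha fun _ hk => hsep hk)
          (sum_one_div_dist_le_mul_sqrt ha fun _ hk => hsep hk)
    _ = 2 * a * √((Fintype.card ι - 1) / a) := by ring
    _ ≤ 2 * a * dist (x i) (x j) := by gcongr; exact hsep hij

end SeparatedFamily

theorem norm_cos_add_two_mul_I_mul_sin (a t : ℝ) :
    ‖(Real.cos t : ℂ) + 2 * Complex.I * (a : ℂ) * (Real.sin t : ℂ)‖ =
      √(Real.cos t ^ 2 + 4 * a ^ 2 * Real.sin t ^ 2) := by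
  have hreIm : (Real.cos t : ℂ) + 2 * Complex.I * (a : ℂ) * (Real.sin t : ℂ) =
      (Real.cos t : ℂ) + ((2 * a * Real.sin t : ℝ) : ℂ) * Complex.I := by
    push_cast
    ring
  rw [hreIm, Complex.norm_add_mul_I]
  ring_nf

theorem two_mul_mul_abs_sin_le_sqrt (a t : ℝ) :
    2 * a * |Real.sin t| ≤ √(Real.cos t ^ 2 + 4 * a ^ 2 * Real.sin t ^ 2) := by
  refine Real.le_sqrt_of_sq_le ?_
  rw [mul_pow, sq_abs, mul_pow]
  linarith [sq_nonneg (Real.cos t)]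

/-- **Gershgorin disc separation for the zero trajectories.** If the (pairwise
distinct) initial zeros `λ⁰_1, …, λ⁰_r` satisfy `min_{i≠j} |λ⁰_i - λ⁰_j| ≥ √((r-1)/a)`
with `a > 0`, then along the phase-shift evolution
`Λ(t) = (cos t + 2ia sin t) diag(λ⁰) + sin(t) P`, `P_{jk} = i(1-δ_{jk})/(λ⁰_j - λ⁰_k)`,
the Gershgorin discs stay pairwise disjoint:
`|Λ_{ii}(t) - Λ_{jj}(t)| ≥ R_i(t) + R_j(t)` for all `t` and `i ≠ j`; explicitly,
`|λ⁰_i - λ⁰_j| √(cos²t + 4a² sin²t) ≥ |sin t| (Σ_{k≠i} 1/|λ⁰_k - λ⁰_i| + Σ_{k≠j} 1/|λ⁰_k - λ⁰_j|)`. -/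
theorem gershgorin_disc_separation (r : ℕ) (hr : 1 ≤ r) (a : ℝ) (ha : 0 < a)
    (lam0 : Fin r → ℂ) (hinj : Function.Injective lam0)
    (hsep : ∀ i j : Fin r, i ≠ j → Real.sqrt (((r : ℝ) - 1) / a) ≤ ‖lam0 i - lam0 j‖)
    (Λ : ℝ → Matrix (Fin r) (Fin r) ℂ)
    (hΛ : ∀ t : ℝ, Λ t = Matrix.of fun i j =>
      if i = j then ((Real.cos t : ℂ) + 2 * Complex.I * (a : ℂ) * (Real.sin t : ℂ)) * lam0 i
      else (Real.sin t : ℂ) * (Complex.I / (lam0 i - lam0 j)))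
    (R : Fin r → ℝ → ℝ)
    (hR : ∀ (i : Fin r) (t : ℝ),
      R i t = |Real.sin t| * ∑ j ∈ Finset.univ.erase i, 1 / ‖lam0 i - lam0 j‖) :
    ∀ (t : ℝ) (i j : Fin r), i ≠ j →
      R i t + R j t ≤ ‖Λ t i i - Λ t j j‖ ∧
      |Real.sin t| * ((∑ k ∈ Finset.univ.erase i, 1 / ‖lam0 k - lam0 i‖) +
          ∑ k ∈ Finset.univ.erase j, 1 / ‖lam0 k - lam0 j‖)
        ≤ ‖lam0 i - lam0 j‖ * Real.sqrt (Real.cos t ^ 2 + 4 * a ^ 2 * Real.sin t ^ 2) := by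
  intro t i j hij
  have hrows := sum_one_div_dist_add_sum_one_div_dist_le (x := lam0) ha
    (by simpa [Pairwise, dist_eq_norm] using hsep) hij
  simp only [dist_eq_norm] at hrows
  have hexplicit : |Real.sin t| * ((∑ k ∈ Finset.univ.erase i, 1 / ‖lam0 k - lam0 i‖) +
        ∑ k ∈ Finset.univ.erase j, 1 / ‖lam0 k - lam0 j‖)
      ≤ ‖lam0 i - lam0 j‖ * √(Real.cos t ^ 2 + 4 * a ^ 2 * Real.sin t ^ 2) := by
    calc _ ≤ |Real.sin t| * (2 * a * ‖lam0 i - lam0 j‖) := by gcongr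
      _ = ‖lam0 i - lam0 j‖ * (2 * a * |Real.sin t|) := by ring
      _ ≤ _ := by gcongr; exact two_mul_mul_abs_sin_le_sqrt a t
  have hdiag : ‖Λ t i i - Λ t j j‖ =
      ‖lam0 i - lam0 j‖ * √(Real.cos t ^ 2 + 4 * a ^ 2 * Real.sin t ^ 2) := by
    simp only [hΛ, Matrix.of_apply, if_true]
    rw [← mul_sub, norm_mul, norm_cos_add_two_mul_I_mul_sin, mul_comm]
  refine ⟨?_, hexplicit⟩
  rw [hdiag, hR, hR, ← mul_add]
  simpa only [norm_sub_rev] using hexplicit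
end

section
/- (Existence of real zeros for phase-shifted wavefunctions under a distance condition.) Let r ≥ 1, let a > 0 be real, and let λ⁰_1, …, λ⁰_r ∈ ℂ be pairwise distinct with min_{i≠j} |λ⁰_i − λ⁰_j| ≥ √((r−1)/a). Define Λ(t) = (cos t + 2ia sin t)·diag(λ⁰_1,…,λ⁰_r) + sin(t)·P with P_{jk} = i/(λ⁰_j − λ⁰_k) for j ≠ k and P_{jj} = 0, and radii R_i(t) = |sin t| · Σ_{j≠i} 1/|λ⁰_i − λ⁰_j|. Suppose μ_1, …, μ_r : ℝ → ℂ are continuous, 2π-periodic functions such that for every t and every i, μ_i(t) is an eigenvalue of Λ(t) and |μ_i(t) − Λ_{ii}(t)| ≤ R_i(t). Then for every i there exist t, t' ∈ [0, 2π) with t ≠ t' such that μ_i(t) and μ_i(t') are real. In particular, the total number of real zeros over all phase-shifted wavefunctions is at least 2r. -/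
open scoped BigOperators

/-!
Where `sin` vanishes, the Gershgorin disc degenerates to its centre, so the trajectory is at `w` at
time `0`, at `-w` at time `π` and back at `w` at time `2π`. Its imaginary part therefore has a zero
on `[0, π)` and again on `[π, 2π)`, by the intermediate value theorem.
-/

theorem exists_mem_Ico_eq_zero_of_eq_neg {α δ : Type*} [ConditionallyCompleteLinearOrder α]
    [TopologicalSpace α] [OrderTopology α] [DenselyOrdered α] [AddCommGroup δ] [LinearOrder δ]
    [IsOrderedAddMonoid δ] [TopologicalSpace δ] [OrderClosedTopology δ] {f : α → δ} {x y : α}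
    (hxy : x < y) (hf : ContinuousOn f (Set.Icc x y)) (hneg : f y = -f x) :
    ∃ c ∈ Set.Ico x y, f c = 0 := by
  rcases eq_or_ne (f x) 0 with hx | hx
  · exact ⟨x, Set.left_mem_Ico.mpr hxy, hx⟩
  have hmem : (0 : δ) ∈ Set.uIcc (f x) (f y) := by
    rw [hneg, Set.mem_uIcc]
    simpa using le_total (f x) 0
  obtain ⟨c, hc, hfc⟩ := intermediate_value_uIcc (by rwa [Set.uIcc_of_le hxy.le]) hmem
  rw [Set.uIcc_of_le hxy.le] at hc
  have hcy : c ≠ y := by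
    rintro rfl
    exact hx (neg_eq_zero.mp (hneg ▸ hfc))
  exact ⟨c, ⟨hc.1, hc.2.lt_of_ne hcy⟩, hfc⟩

theorem eq_cos_mul_of_sin_eq_zero {t C : ℝ} {b w z : ℂ} (ht : Real.sin t = 0)
    (hz : ‖z - (Real.cos t + b * Real.sin t) * w‖ ≤ |Real.sin t| * C) :
    z = Real.cos t * w := by
  rw [ht, abs_zero, zero_mul, norm_le_zero_iff, sub_eq_zero] at hz
  simpa using hz

theorem real_zeros_of_phase_shift_general {b w : ℂ} {C : ℝ} {z : ℝ → ℂ}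
    (hcont : ContinuousOn z (Set.Icc 0 (2 * Real.pi)))
    (hdisc : ∀ t ∈ Set.Icc 0 (2 * Real.pi),
      ‖z t - (Real.cos t + b * Real.sin t) * w‖ ≤ |Real.sin t| * C) :
    ∃ t t' : ℝ,
      t ∈ Set.Ico (0 : ℝ) (2 * Real.pi) ∧ t' ∈ Set.Ico (0 : ℝ) (2 * Real.pi) ∧
      t ≠ t' ∧ (z t).im = 0 ∧ (z t').im = 0 := by
  have hpi : 0 < Real.pi := Real.pi_pos
  have hpi2 : Real.pi < 2 * Real.pi := by linarith
  have him : ContinuousOn (fun t => (z t).im) (Set.Icc 0 (2 * Real.pi)) :=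
    Complex.continuous_im.comp_continuousOn hcont
  have hz0 : z 0 = w := by
    simpa using eq_cos_mul_of_sin_eq_zero Real.sin_zero (hdisc 0 ⟨le_rfl, by linarith⟩)
  have hzpi : z Real.pi = -w := by
    simpa using eq_cos_mul_of_sin_eq_zero Real.sin_pi (hdisc Real.pi ⟨hpi.le, hpi2.le⟩)
  have hz2pi : z (2 * Real.pi) = w := by
    simpa using eq_cos_mul_of_sin_eq_zero Real.sin_two_pi (hdisc _ ⟨by linarith, le_rfl⟩)
  obtain ⟨t, ht, hzt⟩ := exists_mem_Ico_eq_zero_of_eq_neg hpi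
    (him.mono (Set.Icc_subset_Icc_right hpi2.le)) (by simp [hz0, hzpi])
  obtain ⟨t', ht', hzt'⟩ := exists_mem_Ico_eq_zero_of_eq_neg hpi2
    (him.mono (Set.Icc_subset_Icc_left hpi.le)) (by simp [hzpi, hz2pi])
  exact ⟨t, t', ⟨ht.1, ht.2.trans hpi2⟩, ⟨hpi.le.trans ht'.1, ht'.2⟩,
    (ht.2.trans_le ht'.1).ne, hzt, hzt'⟩

/-- **Existence of real zeros for phase-shifted wavefunctions under a distance
condition.** Under the separation condition `min_{i≠j} |λ⁰_i - λ⁰_j| ≥ √((r-1)/a)`,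
any continuous `2π`-periodic eigenvalue trajectories `μ_i(t)` of
`Λ(t) = (cos t + 2ia sin t) diag(λ⁰) + sin(t) P` that remain in the corresponding
Gershgorin discs must each cross the real axis at two distinct times in `[0, 2π)`.
In particular the total number of real zeros over all phase-shifted wavefunctions
is at least `2r`. -/
theorem real_zeros_of_phase_shift (r : ℕ) (hr : 1 ≤ r) (a : ℝ) (ha : 0 < a)
    (lam0 : Fin r → ℂ) (hinj : Function.Injective lam0)
    (hsep : ∀ i j : Fin r, i ≠ j → Real.sqrt (((r : ℝ) - 1) / a) ≤ ‖lam0 i - lam0 j‖)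
    (Λ : ℝ → Matrix (Fin r) (Fin r) ℂ)
    (hΛ : ∀ t : ℝ, Λ t = Matrix.of fun i j =>
      if i = j then ((Real.cos t : ℂ) + 2 * Complex.I * (a : ℂ) * (Real.sin t : ℂ)) * lam0 i
      else (Real.sin t : ℂ) * (Complex.I / (lam0 i - lam0 j)))
    (R : Fin r → ℝ → ℝ)
    (hR : ∀ (i : Fin r) (t : ℝ),
      R i t = |Real.sin t| * ∑ j ∈ Finset.univ.erase i, 1 / ‖lam0 i - lam0 j‖)
    (μ : Fin r → ℝ → ℂ)
    (hμcont : ∀ i : Fin r, Continuous (μ i))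
    (hμper : ∀ (i : Fin r) (t : ℝ), μ i (t + 2 * Real.pi) = μ i t)
    (hμeig : ∀ (i : Fin r) (t : ℝ), (Λ t - μ i t • (1 : Matrix (Fin r) (Fin r) ℂ)).det = 0)
    (hμdisc : ∀ (i : Fin r) (t : ℝ), ‖μ i t - Λ t i i‖ ≤ R i t) :
    ∀ i : Fin r, ∃ t t' : ℝ,
      t ∈ Set.Ico (0 : ℝ) (2 * Real.pi) ∧ t' ∈ Set.Ico (0 : ℝ) (2 * Real.pi) ∧
      t ≠ t' ∧ (μ i t).im = 0 ∧ (μ i t').im = 0 := by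
  exact fun i => real_zeros_of_phase_shift_general (hμcont i).continuousOn fun t _ => by
    simpa only [hΛ, hR, Matrix.of_apply, if_true] using hμdisc i t
end

section
/- (Existence of real zeros under an imbalance condition.) Let n ≥ 1 and let λ_1, …, λ_n : [0, π] → ℂ be continuous functions such that the multiset { −λ_1(π), …, −λ_n(π) } is equal to the multiset { λ_1(0), …, λ_n(0) }. If the number of indices i with Im(λ_i(0)) > 0 differs from the number of indices i with Im(λ_i(0)) < 0, then there exist an index i and a time t ∈ [0, π] such that Im(λ_i(t)) = 0, i.e. λ_i(t) is real. -/
open scoped BigOperators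

/-!
Follow the imaginary parts `f i` of the trajectories. If none vanishes on the connected set `s`,
each keeps its sign from `a` to `b`. Thus as many are negative at `a` as at `b`; reversing signs at
`b` recovers the multiset of values at `a`, so this is also the number that are positive at `a`.
-/

theorem card_filter_eq_of_map_val_eq {ι κ β : Type*} {s : Finset ι} {t : Finset κ} {f : ι → β}
    {g : κ → β} (h : s.val.map f = t.val.map g) (p : β → Prop) [DecidablePred p] :
    (s.filter fun i => p (f i)).card = (t.filter fun j => p (g j)).card := by
  simpa only [Multiset.countP_map, Finset.card_def, Finset.filter_val] using
    congrArg (Multiset.countP p) h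

section Preconnected

variable {X α : Type*} [TopologicalSpace X] [TopologicalSpace α] [LinearOrder α]
  [OrderClosedTopology α] {s : Set X} {a b : X}

theorem lt_iff_lt_of_isPreconnected_of_ne {f : X → α} {c : α} (hs : IsPreconnected s)
    (hf : ContinuousOn f s) (hc : ∀ x ∈ s, f x ≠ c) (ha : a ∈ s) (hb : b ∈ s) :
    f a < c ↔ f b < c :=
  ⟨fun h => hs.gt_of_ne hf hc ⟨a, ha, h⟩ hb, fun h => hs.gt_of_ne hf hc ⟨b, hb, h⟩ ha⟩

theorem real_zero_of_imbalance_general {ι : Type*} [Fintype ι] [AddGroup α] [AddLeftStrictMono α]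
    (hs : IsPreconnected s) (ha : a ∈ s) (hb : b ∈ s) {f : ι → X → α}
    (hf : ∀ i, ContinuousOn (f i) s)
    (hmul : (Finset.univ.val.map fun i => -f i b) = Finset.univ.val.map fun i => f i a)
    (himb : (Finset.univ.filter fun i => 0 < f i a).card ≠
      (Finset.univ.filter fun i => f i a < 0).card) :
    ∃ i, ∃ x ∈ s, f i x = 0 := by
  by_contra! hne
  refine himb ?_
  calc (Finset.univ.filter fun i => 0 < f i a).card
      = (Finset.univ.filter fun i => 0 < -f i b).card :=
        (card_filter_eq_of_map_val_eq hmul (0 < ·)).symm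
    _ = (Finset.univ.filter fun i => f i b < 0).card := by simp only [Left.neg_pos_iff]
    _ = (Finset.univ.filter fun i => f i a < 0).card := by
        simp only [lt_iff_lt_of_isPreconnected_of_ne hs (hf _) (hne _) hb ha]

end Preconnected

open Classical in
/-- **Existence of real zeros under an imbalance condition.** Let `λ_1, …, λ_n` be
continuous zero trajectories on `[0, π]` such that the multiset
`{-λ_1(π), …, -λ_n(π)}` equals the multiset `{λ_1(0), …, λ_n(0)}`. If the number of
initial zeros in the open upper half-plane differs from the number in the open lower
half-plane, then some trajectory meets the real axis: there are `i` and `t ∈ [0, π]`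
with `λ_i(t)` real. -/
theorem real_zero_of_imbalance (n : ℕ) (hn : 1 ≤ n) (lam : Fin n → ℝ → ℂ)
    (hcont : ∀ i : Fin n, ContinuousOn (lam i) (Set.Icc 0 Real.pi))
    (hmul : (Finset.univ.val.map fun i : Fin n => -lam i Real.pi) =
      (Finset.univ.val.map fun i : Fin n => lam i 0))
    (himb : (Finset.univ.filter fun i : Fin n => 0 < (lam i 0).im).card ≠
      (Finset.univ.filter fun i : Fin n => (lam i 0).im < 0).card) :
    ∃ (i : Fin n) (t : ℝ), t ∈ Set.Icc (0 : ℝ) Real.pi ∧ (lam i t).im = 0 :=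
  real_zero_of_imbalance_general isPreconnected_Icc (Set.left_mem_Icc.2 Real.pi_pos.le)
    (Set.right_mem_Icc.2 Real.pi_pos.le)
    (fun i => Complex.continuous_im.comp_continuousOn (hcont i))
    (by simpa only [Multiset.map_map, Function.comp_def, Complex.neg_im] using
      congrArg (Multiset.map Complex.im) hmul)
    himb
end
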